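/- arXiv:1904.10706 — 9 statements merged into one kernel-verified Lean document; each statement's English description precedes it below -/
import Mathlib

section
/- Let (H, f) be an LP-type problem whose combinatorial dimension is at most d, let I be a finite index set with |I| = m, and let π : I → H model a multiset of m elements of H. For an integer r with 1 ≤ r < m and each r-element subset R ⊆ I, define the violator set V_R = { i ∈ I : f(π(R)) < f(π(R) ∪ {π(i)}) }. Then the sum of |V_R| over all r-element subsets R of I is at most d · C(m, r+1); equivalently, the expected size of V_R for a uniformly random r-element subset R of I is at most d · (m − r)/(r + 1). -/
open Finset

/-- Every finite set contains a basis with the same value. -/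
theorem exists_basis_subset {α T : Type*} [LinearOrder T] (f : Finset α → T)
    (mono : ∀ F G : Finset α, F ⊆ G → f F ≤ f G) (G : Finset α) :
    ∃ B ⊆ G, f B = f G ∧ ∀ B' : Finset α, B' ⊂ B → f B' < f B := by
  induction G using Finset.strongInduction with
  | H G ih =>
    by_cases hG : ∀ B' : Finset α, B' ⊂ G → f B' < f G
    · exact ⟨G, Subset.rfl, rfl, hG⟩
    · push Not at hG
      obtain ⟨G', hss, hle⟩ := hG
      obtain ⟨B, hB, hfB, hbasis⟩ := ih G' hss
      exact ⟨B, hB.trans hss.subset, hfB.trans (le_antisymm (mono _ _ hss.subset) hle), hbasis⟩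

/-- Sampling lemma for LP-type problems (Lemma 1): the sum of the sizes of the
violator sets over all `r`-element subsets of the index set `I` is at most
`d * C(m, r+1)`; equivalently, the expected violator set size is at most
`d * (m - r)/(r + 1)`. -/
theorem stmt_0 {α ι T : Type*} [DecidableEq α] [Fintype ι] [LinearOrder T]
    (f : Finset α → T)
    (mono : ∀ F G : Finset α, F ⊆ G → f F ≤ f G)
    (locality : ∀ F G : Finset α, F ⊆ G → f F = f G →
      ∀ h : α, f G < f (insert h G) → f F < f (insert h F))
    (d : ℕ)
    (dim : ∀ B : Finset α, (∀ B' : Finset α, B' ⊂ B → f B' < f B) → B.card ≤ d)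
    (m : ℕ) (hm : Fintype.card ι = m)
    (π : ι → α) (r : ℕ) (hr1 : 1 ≤ r) (hrm : r < m) :
    ∑ R ∈ Finset.powersetCard r (Finset.univ : Finset ι),
        (Finset.univ.filter (fun i : ι =>
          f (R.image π) < f (insert (π i) (R.image π)))).card
      ≤ d * Nat.choose m (r + 1) := by
  classical
  rw [← card_sigma, ← hm, ← card_univ (α := ι), ← card_powersetCard]
  have not_mem_of_violates : ∀ (R : Finset ι) (i : ι),
      f (R.image π) < f (insert (π i) (R.image π)) → π i ∉ R.image π := by
    intro R i hlt hmem
    rw [insert_eq_of_mem hmem] at hlt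
    exact lt_irrefl _ hlt
  refine card_le_mul_card_image_of_maps_to
    (f := fun p : (_ : Finset ι) × ι => insert p.2 p.1) ?_ d ?_
  · rintro ⟨R, i⟩ hp
    simp only [mem_sigma, mem_powersetCard_univ, mem_filter_univ] at hp ⊢
    rw [card_insert_of_notMem fun hi =>
      not_mem_of_violates R i hp.2 (mem_image_of_mem π hi), hp.1]
  · intro Q _
    obtain ⟨B, hBQ, hfB, hbasis⟩ := exists_basis_subset f mono (Q.image π)
    refine (card_le_card_of_injOn (fun p => π p.2) ?_ ?_).trans (dim B hbasis)
    · rintro ⟨R, i⟩ hp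
      simp only [coe_filter, mem_sigma, mem_filter_univ, Set.mem_ofPred_eq] at hp
      obtain ⟨⟨_, hlt⟩, rfl⟩ := hp
      by_contra hi
      rw [image_insert] at hBQ hfB
      have hBR : B ⊆ R.image π := (subset_insert_iff_of_notMem hi).1 hBQ
      exact (hfB ▸ hlt).not_ge (mono _ _ hBR)
    · rintro ⟨R, i⟩ hp ⟨S, j⟩ hq (hij : π i = π j)
      simp only [coe_filter, mem_sigma, mem_filter_univ, Set.mem_ofPred_eq] at hp hq
      obtain ⟨⟨_, hlt⟩, rfl⟩ := hp
      obtain ⟨⟨_, hlt'⟩, hQ⟩ := hq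
      have hiR := not_mem_of_violates R i hlt
      have hjS := not_mem_of_violates S j hlt'
      obtain rfl : i = j := by
        by_contra hne
        have hj : j ∈ insert i R := hQ ▸ mem_insert_self j S
        exact hiR (hij ▸ mem_image_of_mem π (mem_of_mem_insert_of_ne hj (Ne.symm hne)))
      obtain rfl : R = S := by
        rw [← erase_insert fun hi => hiR (mem_image_of_mem π hi), ← hQ,
          erase_insert fun hi => hjS (mem_image_of_mem π hi)]
      rfl
end

section
/- Let (H, f) be an LP-type problem (f satisfies Monotonicity and Locality), let B ⊆ H satisfy f(B) = f(H) (an optimal basis or any optimal subset), and let R ⊆ H satisfy f(R) < f(H). Then there exists an element h ∈ B with f(R) < f(R ∪ {h}). -/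
open Finset

/-- For an LP-type problem `(H, f)`, if `B ⊆ H` satisfies `f(B) = f(H)` and
`R ⊆ H` satisfies `f(R) < f(H)`, then some element `h ∈ B` violates `R`, i.e.
`f(R) < f(R ∪ {h})`. -/
theorem stmt_2 {α T : Type*} [Fintype α] [DecidableEq α] [LinearOrder T]
    (f : Finset α → T)
    (mono : ∀ F G : Finset α, F ⊆ G → f F ≤ f G)
    (locality : ∀ F G : Finset α, F ⊆ G → f F = f G →
      ∀ h : α, f G < f (insert h G) → f F < f (insert h F))
    (B R : Finset α)
    (hB : f B = f Finset.univ)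
    (hR : f R < f Finset.univ) :
    ∃ h ∈ B, f R < f (insert h R) := by
  by_contra! hno
  have union_eq : ∀ S : Finset α, S ⊆ B → f R = f (S ∪ R) := by
    intro S
    induction S using Finset.induction_on with
    | empty => simp
    | insert a S _ ih =>
      intro hS
      obtain ⟨haB, hSB⟩ := Finset.insert_subset_iff.mp hS
      have hSR := ih hSB
      rw [Finset.insert_union]
      refine hSR.trans (le_antisymm (mono _ _ (Finset.subset_insert _ _)) ?_)
      by_contra! hlt
      exact (hno a haB).not_gt
        (locality R (S ∪ R) Finset.subset_union_right hSR a hlt)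
  have hBR : f B ≤ f R :=
    (mono B (B ∪ R) Finset.subset_union_left).trans (union_eq B subset_rfl).ge
  exact (hBR.trans_lt hR).ne hB
end

section
/- Let (H, f) be an LP-type problem with |H| = n, let d ≥ 1, and let B ⊆ H be an optimal basis (f(B) = f(H)) with |B| ≤ d. Let k ≥ 1 and consider multiplicity functions μ_0, μ_1, …, μ_{k·d} : H → ℕ with μ_0(h) = 1 for all h, such that for every t < k·d there is a set R_t ⊆ H whose violator set V_t = { h ∈ H : f(R_t) < f(R_t ∪ {h}) } is nonempty, the iteration is successful, i.e. Σ_{h ∈ V_t} μ_t(h) ≤ (Σ_{h ∈ H} μ_t(h)) / (3d), and μ_{t+1}(h) = 2·μ_t(h) for h ∈ V_t and μ_{t+1}(h) = μ_t(h) otherwise. Then 2^k ≤ Σ_{h ∈ B} μ_{k·d}(h) and Σ_{h ∈ H} μ_{k·d}(h) < n · e^{k/3}. -/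
open Finset

/-- If no element of `S` violates `R`, then adding all of `S` to `R` does not change the value. -/
theorem value_union_eq_of_forall_not_violates {α T : Type*} [DecidableEq α] [LinearOrder T]
    {f : Finset α → T}
    (mono : ∀ F G : Finset α, F ⊆ G → f F ≤ f G)
    (locality : ∀ F G : Finset α, F ⊆ G → f F = f G →
      ∀ h : α, f G < f (insert h G) → f F < f (insert h F))
    {R S : Finset α} (hS : ∀ b ∈ S, ¬ f R < f (insert b R)) :
    f R = f (S ∪ R) := by
  induction S using Finset.induction_on with
  | empty => simp
  | insert b S _ ih =>
    have ih' := ih fun c hc => hS c (mem_insert_of_mem hc)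
    have hb := hS b (mem_insert_self b S)
    have hle : f (insert b (S ∪ R)) ≤ f (S ∪ R) :=
      not_lt.mp fun hlt => hb (locality R (S ∪ R) subset_union_right ih' b hlt)
    rw [insert_union, ih']
    exact le_antisymm (mono _ _ (subset_insert _ _)) hle

/-- A set of maximum value contains a violator of every `R` that has a violator at all. -/
theorem exists_mem_violates_of_value_eq_univ {α T : Type*} [Fintype α] [DecidableEq α]
    [LinearOrder T] {f : Finset α → T}
    (mono : ∀ F G : Finset α, F ⊆ G → f F ≤ f G)
    (locality : ∀ F G : Finset α, F ⊆ G → f F = f G →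
      ∀ h : α, f G < f (insert h G) → f F < f (insert h F))
    {B R : Finset α} (hB : f B = f univ) (hR : ∃ h, f R < f (insert h R)) :
    ∃ b ∈ B, f R < f (insert b R) := by
  by_contra! hcon
  obtain ⟨h, hh⟩ := hR
  have hRB := value_union_eq_of_forall_not_violates mono locality
    fun b hb => not_lt.mpr (hcon b hb)
  have hle : f (insert h R) ≤ f R := calc
    f (insert h R) ≤ f univ := mono _ _ (subset_univ _)
    _ = f B := hB.symm
    _ ≤ f (B ∪ R) := mono _ _ subset_union_left
    _ = f R := hRB.symm
  exact hle.not_gt hh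

/-- Doubling a family of naturals on a set that meets `B` at least doubles its product over `B`. -/
theorem two_mul_prod_le_prod_ite {α : Type*} [DecidableEq α] {B : Finset α} {p : α → Prop}
    [DecidablePred p] (g : α → ℕ) (hB : ∃ b ∈ B, p b) :
    2 * ∏ h ∈ B, g h ≤ ∏ h ∈ B, if p h then 2 * g h else g h := by
  obtain ⟨b, hb, hpb⟩ := hB
  rw [← mul_prod_erase B g hb, ← mul_prod_erase B _ hb, if_pos hpb, ← mul_assoc]
  refine Nat.mul_le_mul_left _ (prod_le_prod' fun h _ => ?_)
  split_ifs <;> omega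

/-- If a product of at most `d` naturals is at least `2 ^ (k * d)`, some factor is at
least `2 ^ k`. -/
theorem exists_two_pow_le_of_two_pow_le_prod {α : Type*} {B : Finset α} {g : α → ℕ} {k d : ℕ}
    (hB : B.Nonempty) (hcard : B.card ≤ d) (hg : ∀ h ∈ B, 0 < g h)
    (hprod : 2 ^ (k * d) ≤ ∏ h ∈ B, g h) : ∃ b ∈ B, 2 ^ k ≤ g b := by
  by_contra! hcon
  have hlt : ∏ h ∈ B, g h < ∏ _h ∈ B, 2 ^ k := prod_lt_prod_of_nonempty hg hcon hB
  rw [prod_const, ← pow_mul] at hlt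
  have hle : 2 ^ (k * B.card) ≤ 2 ^ (k * d) :=
    Nat.pow_le_pow_right two_pos (Nat.mul_le_mul_left k hcard)
  omega

/-- Lemma 2 (multiplicity growth in Clarkson's algorithm): after `k·d`
successful iterations (each doubling the multiplicities of the nonempty
violator set, which has total multiplicity at most a `1/(3d)` fraction),
the total multiplicity of an optimal basis `B` is at least `2^k`, while the
total multiplicity of all of `H` is less than `n · e^{k/3}`. -/
theorem stmt_3 {α T : Type*} [Fintype α] [DecidableEq α] [LinearOrder T]
    (f : Finset α → T)
    (mono : ∀ F G : Finset α, F ⊆ G → f F ≤ f G)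
    (locality : ∀ F G : Finset α, F ⊆ G → f F = f G →
      ∀ h : α, f G < f (insert h G) → f F < f (insert h F))
    (n : ℕ) (hn : Fintype.card α = n)
    (d : ℕ) (hd : 1 ≤ d)
    (B : Finset α)
    (hBopt : f B = f Finset.univ)
    (hBbasis : ∀ B' : Finset α, B' ⊂ B → f B' < f B)
    (hBcard : B.card ≤ d)
    (k : ℕ) (hk : 1 ≤ k)
    (μ : ℕ → α → ℕ) (R : ℕ → Finset α)
    (hμ0 : ∀ h : α, μ 0 h = 1)
    (hVne : ∀ t < k * d,
      (Finset.univ.filter (fun h : α => f (R t) < f (insert h (R t)))).Nonempty)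
    (hsucc : ∀ t < k * d,
      (∑ h ∈ Finset.univ.filter (fun h : α => f (R t) < f (insert h (R t))),
          (μ t h : ℝ))
        ≤ (∑ h : α, (μ t h : ℝ)) / (3 * d))
    (hupd : ∀ t < k * d, ∀ h : α,
      μ (t + 1) h = if f (R t) < f (insert h (R t)) then 2 * μ t h else μ t h) :
    2 ^ k ≤ ∑ h ∈ B, μ (k * d) h ∧
      (∑ h : α, (μ (k * d) h : ℝ)) < n * Real.exp (k / 3) := by
  have hviol : ∀ t < k * d, ∃ b ∈ B, f (R t) < f (insert b (R t)) := fun t ht =>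
    exists_mem_violates_of_value_eq_univ mono locality hBopt <| by
      obtain ⟨h, hh⟩ := hVne t ht
      exact ⟨h, (mem_filter.mp hh).2⟩
  have hkd : 0 < k * d := Nat.mul_pos hk hd
  obtain ⟨b₀, hb₀, -⟩ := hviol 0 hkd
  constructor
  · have hpos : ∀ t ≤ k * d, ∀ h, 0 < μ t h := by
      intro t
      induction t with
      | zero => simp [hμ0]
      | succ t ih =>
        intro ht h
        have := ih (by omega) h
        rw [hupd t (by omega)]
        split_ifs <;> omega
    have hprod : ∀ t ≤ k * d, 2 ^ t ≤ ∏ h ∈ B, μ t h := by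
      intro t
      induction t with
      | zero => simp [hμ0]
      | succ t ih =>
        intro ht
        simp only [hupd t (by omega)]
        have hstep := two_mul_prod_le_prod_ite (μ t) (hviol t (by omega))
        have := ih (by omega)
        rw [pow_succ]
        omega
    obtain ⟨b, hb, hkb⟩ := exists_two_pow_le_of_two_pow_le_prod ⟨b₀, hb₀⟩ hBcard
      (fun h _ => hpos _ le_rfl h) (hprod _ le_rfl)
    exact hkb.trans (single_le_sum (f := μ (k * d)) (fun _ _ => Nat.zero_le _) hb)
  · have hd0 : (0 : ℝ) < d := by exact_mod_cast hd
    have hn0 : (0 : ℝ) < n := by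
      rw [← hn]
      exact_mod_cast Fintype.card_pos_iff.mpr ⟨b₀⟩
    have hsum : ∀ t ≤ k * d, ∑ h, (μ t h : ℝ) ≤ n * (1 / (3 * d) + 1 : ℝ) ^ t := by
      intro t
      induction t with
      | zero => simp [hμ0, hn]
      | succ t ih =>
        intro ht
        calc ∑ h, (μ (t + 1) h : ℝ)
            = ∑ h, (μ t h : ℝ) + ∑ h with f (R t) < f (insert h (R t)), (μ t h : ℝ) := by
              rw [sum_filter, ← sum_add_distrib]
              refine sum_congr rfl fun h _ => ?_
              rw [hupd t (by omega)]
              split_ifs <;> push_cast <;> ring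
          _ ≤ ∑ h, (μ t h : ℝ) + (∑ h, (μ t h : ℝ)) / (3 * d) := by
              gcongr
              exact hsucc t (by omega)
          _ = (∑ h, (μ t h : ℝ)) * (1 / (3 * d) + 1) := by ring
          _ ≤ n * (1 / (3 * d) + 1 : ℝ) ^ t * (1 / (3 * d) + 1) := by
              gcongr
              exact ih (by omega)
          _ = n * (1 / (3 * d) + 1 : ℝ) ^ (t + 1) := by ring
    have hexp : Real.exp (k / 3) = Real.exp (1 / (3 * d)) ^ (k * d) := by
      rw [← Real.exp_nat_mul]
      congr 1
      push_cast
      field_simp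
    refine (hsum _ le_rfl).trans_lt ?_
    rw [hexp]
    have hlt : (1 / (3 * d) + 1 : ℝ) < Real.exp (1 / (3 * d)) :=
      Real.add_one_lt_exp (by positivity)
    exact mul_lt_mul_of_pos_left (pow_lt_pow_left₀ hlt (by positivity) hkd.ne') hn0
end

section
/- Let (H, f) be an LP-type problem of combinatorial dimension at most d (d ≥ 1), let I be a finite index set with |I| = m, π : I → H, and set r = 6d² with r < m. For each r-element subset R ⊆ I let V_R = { i ∈ I : f(π(R)) < f(π(R) ∪ {π(i)}) }. Then the number of r-element subsets R of I with |V_R| > m/(3d) is at most C(m, r)/2; equivalently, for a uniformly random r-element subset R, the probability that |V_R| > m/(3d) is at most 1/2. -/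
open Finset

/-- A multiset has at most `d` extreme elements, i.e. indices whose removal decreases `f`. -/
theorem card_extreme_le {α ι T : Type*} [DecidableEq α] [DecidableEq ι] [LinearOrder T]
    (f : Finset α → T) (mono : ∀ F G : Finset α, F ⊆ G → f F ≤ f G) (d : ℕ)
    (dim : ∀ B : Finset α, (∀ B' : Finset α, B' ⊂ B → f B' < f B) → B.card ≤ d)
    (π : ι → α) (S : Finset ι) :
    (S.filter fun i => f ((S.erase i).image π) < f (S.image π)).card ≤ d := by
  obtain ⟨B, hBS, hB, hbasis⟩ := exists_basis_subset f mono (S.image π)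
  refine le_trans (Finset.card_le_card_of_injOn π ?_ ?_) (dim B hbasis)
  · intro i hi
    simp only [coe_filter, Set.mem_ofPred_eq] at hi
    by_contra hiB
    refine absurd hi.2 (not_lt.mpr (hB ▸ mono _ _ fun b hb => ?_))
    obtain ⟨j, hj, rfl⟩ := mem_image.mp (hBS hb)
    exact mem_image_of_mem π (mem_erase.mpr ⟨fun hji => hiB (hji ▸ hb), hj⟩)
  · intro i hi j hj hij
    simp only [coe_filter, Set.mem_ofPred_eq] at hi hj
    by_contra hne
    refine absurd hi.2 (not_lt.mpr (mono _ _ fun b hb => ?_))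
    obtain ⟨k, hk, rfl⟩ := mem_image.mp hb
    by_cases hki : k = i
    · rw [hki, hij]
      exact mem_image_of_mem π (mem_erase.mpr ⟨fun h => hne h.symm, hj.1⟩)
    · exact mem_image_of_mem π (mem_erase.mpr ⟨hki, hk⟩)

/-- The sampling lemma: the total number of violators of all `r`-element subsets is at most
`d` times the number of `(r + 1)`-element subsets. -/
theorem sum_card_violators_le {α ι T : Type*} [DecidableEq α] [Fintype ι] [LinearOrder T]
    (f : Finset α → T) (mono : ∀ F G : Finset α, F ⊆ G → f F ≤ f G) (d : ℕ)
    (dim : ∀ B : Finset α, (∀ B' : Finset α, B' ⊂ B → f B' < f B) → B.card ≤ d)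
    (π : ι → α) (r : ℕ) :
    ∑ R ∈ powersetCard r (univ : Finset ι),
        (univ.filter fun i : ι => f (R.image π) < f (insert (π i) (R.image π))).card
      ≤ (Fintype.card ι).choose (r + 1) * d := by
  classical
  have notMem : ∀ (R : Finset ι) (i : ι),
      f (R.image π) < f (insert (π i) (R.image π)) → i ∉ R := fun R i h hi => by
    rw [insert_eq_of_mem (mem_image_of_mem π hi)] at h
    exact h.false
  calc
    _ = ((powersetCard r (univ : Finset ι)).sigma fun R =>
          univ.filter fun i : ι => f (R.image π) < f (insert (π i) (R.image π))).card :=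
      (card_sigma _ _).symm
    _ ≤ ((powersetCard (r + 1) (univ : Finset ι)).sigma fun S =>
          S.filter fun i => f ((S.erase i).image π) < f (S.image π)).card := by
      refine Finset.card_le_card_of_injOn (fun p => ⟨insert p.2 p.1, p.2⟩) ?_ ?_
      · rintro ⟨R, i⟩ h
        simp only [mem_coe, mem_sigma, mem_powersetCard_univ, mem_filter, mem_univ,
          true_and] at h ⊢
        have hi := notMem R i h.2
        refine ⟨by rw [card_insert_of_notMem hi, h.1], mem_insert_self _ _, ?_⟩
        rw [erase_insert hi, image_insert]
        exact h.2
      · rintro ⟨R, i⟩ h ⟨R', i'⟩ h' heq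
        simp only [mem_coe, mem_sigma, mem_filter, mem_univ, true_and] at h h'
        simp only [Sigma.mk.injEq, heq_eq_eq] at heq
        obtain ⟨hR, rfl⟩ := heq
        have hRR' : R = R' := by
          rw [← erase_insert (notMem R i h.2), hR, erase_insert (notMem R' i h'.2)]
        rw [hRR']
    _ = ∑ S ∈ powersetCard (r + 1) (univ : Finset ι),
          (S.filter fun i => f ((S.erase i).image π) < f (S.image π)).card := card_sigma _ _
    _ ≤ (powersetCard (r + 1) (univ : Finset ι)).card * d :=
      sum_le_card_nsmul _ _ _ fun S _ => card_extreme_le f mono d dim π S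
    _ = _ := by rw [card_powersetCard, card_univ]

/-- For `r = 6d²`, the number of `r`-element subsets `R` of the index set whose
violator set has size exceeding `m/(3d)` is at most half of all `r`-element
subsets; equivalently, a uniformly random `R` satisfies `|V_R| > m/(3d)` with
probability at most `1/2`. -/
theorem stmt_4 {α ι T : Type*} [DecidableEq α] [Fintype ι] [LinearOrder T]
    (f : Finset α → T)
    (mono : ∀ F G : Finset α, F ⊆ G → f F ≤ f G)
    (locality : ∀ F G : Finset α, F ⊆ G → f F = f G →
      ∀ h : α, f G < f (insert h G) → f F < f (insert h F))
    (d : ℕ) (hd : 1 ≤ d)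
    (dim : ∀ B : Finset α, (∀ B' : Finset α, B' ⊂ B → f B' < f B) → B.card ≤ d)
    (m : ℕ) (hm : Fintype.card ι = m)
    (π : ι → α) (r : ℕ) (hr : r = 6 * d ^ 2) (hrm : r < m) :
    (((Finset.powersetCard r (Finset.univ : Finset ι)).filter (fun R =>
        (m : ℝ) / (3 * d) <
          ((Finset.univ.filter (fun i : ι =>
            f (R.image π) < f (insert (π i) (R.image π)))).card : ℝ))).card : ℝ)
      ≤ (Nat.choose m r : ℝ) / 2 := by
  have hsum := sum_card_violators_le f mono d dim π r
  rw [hm] at hsum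
  set V : Finset ι → ℕ := fun R =>
    (univ.filter fun i : ι => f (R.image π) < f (insert (π i) (R.image π))).card
  set bad := (powersetCard r (univ : Finset ι)).filter fun R =>
    (m : ℝ) / (3 * d) < (V R : ℝ)
  change (bad.card : ℝ) ≤ _
  have markov : (bad.card : ℝ) * (m / (3 * d)) ≤ m.choose (r + 1) * d := by
    calc
      (bad.card : ℝ) * (m / (3 * d)) ≤ ∑ R ∈ bad, (V R : ℝ) := by
        rw [← nsmul_eq_mul]
        exact card_nsmul_le_sum _ _ _ fun R hR => (mem_filter.mp hR).2.le
      _ ≤ ∑ R ∈ powersetCard r (univ : Finset ι), (V R : ℝ) :=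
        sum_le_sum_of_subset_of_nonneg (filter_subset _ _) fun _ _ _ => Nat.cast_nonneg _
      _ ≤ m.choose (r + 1) * d := by exact_mod_cast hsum
  have hchoose : (m.choose (r + 1) : ℝ) * (6 * d ^ 2) ≤ m.choose r * m := by
    have h : m.choose (r + 1) * r ≤ m.choose r * m :=
      calc
        m.choose (r + 1) * r ≤ m.choose (r + 1) * (r + 1) := by gcongr; omega
        _ = m.choose r * (m - r) := Nat.choose_succ_right_eq m r
        _ ≤ m.choose r * m := by gcongr; omega
    rw [hr] at h ⊢
    exact_mod_cast h
  have hd0 : (0 : ℝ) < d := by exact_mod_cast hd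
  have hm0 : (0 : ℝ) < m := by exact_mod_cast (Nat.zero_le r).trans_lt hrm
  rw [mul_div_assoc', div_le_iff₀ (by positivity)] at markov
  refine le_of_mul_le_mul_right ?_ hm0
  linarith
end

section
/- Let (H, f) be an LP-type problem of combinatorial dimension at most d (d ≥ 1), let I be a finite index set with |I| = m, and let π : I → H. Let k ≥ 1 and 1 ≤ r be integers with r < m/2 − k. For each r-element subset R ⊆ I define W_R = { i ∈ I : f(π(R)) < f(π(R) ∪ {π(i)}) }. Then Σ_{R ⊆ I, |R| = r} |W_R|^k ≤ 2 · (k · d · (m − r)/(r + 1))^k · C(m, r); equivalently, the k-th moment of |W_R| over a uniformly random r-element subset R satisfies E[|W_R|^k] ≤ 2 · (k · d · (m − r)/(r + 1))^k. -/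
open Finset

section Violators

variable {ι T : Type*} [LinearOrder T]

/-- Every finite set contains a subset with the same value all of whose proper subsets have a
smaller value. -/
theorem exists_basis (g : Finset ι → T) (mono : ∀ F G : Finset ι, F ⊆ G → g F ≤ g G)
    (Q : Finset ι) :
    ∃ B ⊆ Q, g B = g Q ∧ ∀ B' : Finset ι, B' ⊂ B → g B' < g B := by
  induction Q using Finset.strongInduction with
  | H Q ih =>
    by_cases h : ∀ B' : Finset ι, B' ⊂ Q → g B' < g Q
    · exact ⟨Q, Finset.Subset.refl Q, rfl, h⟩
    · push Not at h
      obtain ⟨Q', hQ', hle⟩ := h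
      obtain ⟨B, hB, hval, hmin⟩ := ih Q' hQ'
      exact ⟨B, hB.trans hQ'.subset,
        hval.trans (le_antisymm (mono _ _ hQ'.subset) hle), hmin⟩

variable [DecidableEq ι]

/-- The `j`-element subsets `S` of `Q` all of whose elements violate `Q \ S`. -/
def violatingSubsets (g : Finset ι → T) (j : ℕ) (Q : Finset ι) : Finset (Finset ι) :=
  (powersetCard j Q).filter fun S => ∀ s ∈ S, g (Q \ S) < g (insert s (Q \ S))

theorem card_violatingSubsets_le (g : Finset ι → T)
    (mono : ∀ F G : Finset ι, F ⊆ G → g F ≤ g G) (d : ℕ)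
    (dim : ∀ B : Finset ι, (∀ B' : Finset ι, B' ⊂ B → g B' < g B) → B.card ≤ d)
    (j : ℕ) (Q : Finset ι) : (violatingSubsets g j Q).card ≤ d ^ j := by
  induction j generalizing Q with
  | zero =>
    refine (card_filter_le _ _).trans ?_
    simp
  | succ j ih =>
    obtain ⟨B, hBQ, hval, hmin⟩ := exists_basis g mono Q
    have hsub : violatingSubsets g (j + 1) Q ⊆
        B.biUnion fun b => (violatingSubsets g j (Q.erase b)).image (insert b) := by
      intro S hS
      simp only [violatingSubsets, mem_filter, mem_powersetCard] at hS
      obtain ⟨⟨hSQ, hcard⟩, hviol⟩ := hS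
      obtain ⟨b, hbB, hbS⟩ : ∃ b ∈ B, b ∈ S := by
        by_contra! hdisj
        obtain ⟨s, hs⟩ : S.Nonempty := card_pos.1 (by omega)
        have hB : B ⊆ Q \ S := fun b hb => mem_sdiff.2 ⟨hBQ hb, hdisj b hb⟩
        have hins : insert s (Q \ S) ⊆ Q := insert_subset (hSQ hs) sdiff_subset
        exact absurd (hviol s hs)
          (not_lt.2 ((mono _ _ hins).trans (hval.symm.le.trans (mono _ _ hB))))
      have hdiff : Q.erase b \ S.erase b = Q \ S := by
        ext x
        simp only [mem_sdiff, mem_erase]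
        grind
      refine mem_biUnion.2 ⟨b, hbB, mem_image.2 ⟨S.erase b, ?_, insert_erase hbS⟩⟩
      simp only [violatingSubsets, mem_filter, mem_powersetCard, hdiff]
      refine ⟨⟨erase_subset_erase b hSQ, ?_⟩, fun s hs => hviol s (mem_of_mem_erase hs)⟩
      rw [card_erase_of_mem hbS, hcard, Nat.add_sub_cancel]
    calc (violatingSubsets g (j + 1) Q).card
        ≤ B.card * d ^ j := (card_le_card hsub).trans
          (card_biUnion_le_card_mul _ _ _ fun b _ => card_image_le.trans (ih _))
      _ ≤ d * d ^ j := Nat.mul_le_mul_right _ (dim B hmin)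
      _ = d ^ (j + 1) := (pow_succ' d j).symm

/-- Bound on the binomial moments of the number of violators. -/
theorem sum_choose_card_violators_le [Fintype ι] (g : Finset ι → T)
    (mono : ∀ F G : Finset ι, F ⊆ G → g F ≤ g G) (d : ℕ)
    (dim : ∀ B : Finset ι, (∀ B' : Finset ι, B' ⊂ B → g B' < g B) → B.card ≤ d)
    (r j : ℕ) :
    ∑ R ∈ powersetCard r (univ : Finset ι),
        ((univ.filter fun i => g R < g (insert i R)).card).choose j
      ≤ (Fintype.card ι).choose (r + j) * d ^ j := by
  simp only [← card_powersetCard]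
  rw [← card_sigma]
  calc _ ≤ ((powersetCard (r + j) (univ : Finset ι)).sigma
            fun Q => violatingSubsets g j Q).card := ?_
    _ ≤ _ := by
      rw [card_sigma]
      refine (sum_le_card_nsmul _ _ _ fun Q _ =>
        card_violatingSubsets_le g mono d dim j Q).trans ?_
      simp
  have hdisj : ∀ R S : Finset ι,
      S ⊆ (univ.filter fun i => g R < g (insert i R)) → Disjoint R S := by
    intro R S hS
    refine disjoint_left.2 fun i hiR hiS => ?_
    have := (mem_filter.1 (hS hiS)).2
    rw [insert_eq_of_mem hiR] at this
    exact lt_irrefl _ this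
  refine card_le_card_of_injOn (fun p => ⟨p.1 ∪ p.2, p.2⟩) ?_ ?_
  · rintro ⟨R, S⟩ h
    simp only [coe_sigma, Set.mem_sigma_iff, mem_coe, mem_powersetCard] at h
    obtain ⟨⟨-, hR⟩, hS, hj⟩ := h
    have hd := hdisj R S hS
    simp only [coe_sigma, Set.mem_sigma_iff, mem_coe, mem_powersetCard, violatingSubsets,
      mem_filter, union_sdiff_cancel_right hd]
    exact ⟨⟨subset_univ _, by rw [card_union_of_disjoint hd, hR, hj]⟩,
      ⟨subset_union_right, hj⟩, fun s hs => (mem_filter.1 (hS hs)).2⟩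
  · rintro ⟨R, S⟩ h ⟨R', S'⟩ h' heq
    simp only [coe_sigma, Set.mem_sigma_iff, mem_coe, mem_powersetCard] at h h'
    simp only [Sigma.mk.injEq, heq_eq_eq] at heq
    obtain ⟨hU, rfl⟩ := heq
    have hRR : R = R' := by
      rw [← union_sdiff_cancel_right (hdisj R S h.2.1), hU,
        union_sdiff_cancel_right (hdisj R' S h'.2.1)]
    rw [hRR]

end Violators

theorem mul_choose_eq (w j : ℕ) :
    w * w.choose j = j * w.choose j + (j + 1) * w.choose (j + 1) := by
  rcases le_or_gt j w with h | h
  · have := Nat.choose_succ_right_eq w j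
    obtain ⟨t, rfl⟩ := Nat.exists_eq_add_of_le h
    rw [Nat.add_sub_cancel_left] at this
    linarith
  · simp [Nat.choose_eq_zero_of_lt h, Nat.choose_eq_zero_of_lt (Nat.lt_succ_of_lt h)]

/-- Geometric bounds on binomial moments give bounds on mixed power-binomial moments. -/
theorem sum_pow_mul_choose_le {β : Type*} (s : Finset β) (w : β → ℕ) (y c : ℝ) (hy : 1 ≤ y)
    (hc : 0 ≤ c) (h : ∀ j, ∑ b ∈ s, ((w b).choose j : ℝ) ≤ y ^ j * c) (k j : ℕ) :
    ∑ b ∈ s, (w b : ℝ) ^ k * ((w b).choose j : ℝ)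
      ≤ (∏ i ∈ range k, (2 * ((j : ℝ) + i) + 1)) * (y ^ (k + j) * c) := by
  induction k generalizing j with
  | zero => simpa using h j
  | succ k ih =>
    have hsplit : ∑ b ∈ s, (w b : ℝ) ^ (k + 1) * ((w b).choose j : ℝ)
        = j * ∑ b ∈ s, (w b : ℝ) ^ k * ((w b).choose j : ℝ)
          + (j + 1) * ∑ b ∈ s, (w b : ℝ) ^ k * ((w b).choose (j + 1) : ℝ) := by
      rw [mul_sum, mul_sum, ← sum_add_distrib]
      refine sum_congr rfl fun b _ => ?_
      have := congrArg (Nat.cast : ℕ → ℝ) (mul_choose_eq (w b) j)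
      push_cast at this
      linear_combination (w b : ℝ) ^ k * this
    have hfirst := ih j
    have hsecond := ih (j + 1)
    have hprod : ∏ i ∈ range k, (2 * ((j : ℝ) + i) + 1)
        ≤ ∏ i ∈ range k, (2 * (((j + 1 : ℕ) : ℝ) + i) + 1) := by
      refine prod_le_prod (fun i _ => by positivity) fun i _ => ?_
      push_cast
      linarith
    have hpow : y ^ (k + j) * c ≤ y ^ (k + (j + 1)) * c :=
      mul_le_mul_of_nonneg_right (pow_le_pow_right₀ hy (by omega)) hc
    have hmono := hfirst.trans (mul_le_mul hprod hpow (by positivity)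
      (prod_nonneg fun i _ => by positivity))
    have hshift : ∏ i ∈ range (k + 1), (2 * ((j : ℝ) + i) + 1)
        = (∏ i ∈ range k, (2 * (((j + 1 : ℕ) : ℝ) + i) + 1)) * (2 * (j : ℝ) + 1) := by
      rw [prod_range_succ']
      congr 1
      · refine prod_congr rfl fun i _ => ?_
        push_cast
        ring
      · simp
    rw [hsplit, hshift, show k + 1 + j = k + (j + 1) by ring]
    have hj : (0 : ℝ) ≤ j := j.cast_nonneg
    have hleft := mul_le_mul_of_nonneg_left hmono hj
    have hright := mul_le_mul_of_nonneg_left hsecond (by positivity : (0 : ℝ) ≤ j + 1)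
    linarith

/-- The product of the first `k` odd numbers is at most `k ^ k`. -/
theorem prod_odd_le_pow (k : ℕ) : ∏ i ∈ range k, (2 * (i : ℝ) + 1) ≤ (k : ℝ) ^ k := by
  induction k with
  | zero => simp
  | succ k ih =>
    rw [prod_range_succ]
    have hbern : 2 * (k : ℝ) ^ k ≤ ((k : ℝ) + 1) ^ k ∨ k = 0 := by
      rcases Nat.eq_zero_or_pos k with hk | hk
      · exact Or.inr hk
      · left
        have hk' : (0 : ℝ) < k := by exact_mod_cast hk
        have hone : (1 : ℝ) + k * (1 / k) ≤ (1 + 1 / k) ^ k :=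
          one_add_mul_le_pow (by have : (0 : ℝ) < 1 / k := by positivity
                                 linarith) k
        rw [mul_one_div_cancel hk'.ne'] at hone
        have hfac : ((k : ℝ) + 1) ^ k = (1 + 1 / k) ^ k * (k : ℝ) ^ k := by
          rw [← mul_pow]
          congr 1
          field_simp
        rw [hfac]
        exact mul_le_mul_of_nonneg_right (by linarith) (by positivity)
    rcases hbern with hbern | rfl
    · push_cast
      have hk : (0 : ℝ) ≤ k := k.cast_nonneg
      calc _ ≤ (k : ℝ) ^ k * (2 * k + 1) :=
            mul_le_mul_of_nonneg_right ih (by positivity)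
        _ ≤ (2 * (k : ℝ) ^ k) * (k + 1) := by
          have : (0 : ℝ) ≤ (k : ℝ) ^ k := by positivity
          linarith
        _ ≤ ((k : ℝ) + 1) ^ k * (k + 1) :=
            mul_le_mul_of_nonneg_right hbern (by positivity)
        _ = _ := (pow_succ _ _).symm
    · simp

theorem choose_add_le_pow_mul_choose (m r j : ℕ) (hrm : r ≤ m) :
    (m.choose (r + j) : ℝ) ≤ (((m : ℝ) - r) / (r + 1)) ^ j * m.choose r := by
  have hx : (0 : ℝ) ≤ (m : ℝ) - r := sub_nonneg.2 (by exact_mod_cast hrm)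
  induction j with
  | zero => simp
  | succ j ih =>
    have hrec : (m.choose (r + j + 1) : ℝ) * ((r + j + 1 : ℕ) : ℝ)
        = m.choose (r + j) * ((m - (r + j) : ℕ) : ℝ) := by
      exact_mod_cast Nat.choose_succ_right_eq m (r + j)
    have hsub : ((m - (r + j) : ℕ) : ℝ) ≤ (m : ℝ) - r := by
      rw [← Nat.cast_sub hrm]
      exact_mod_cast (by omega : m - (r + j) ≤ m - r)
    have hstep : (m.choose (r + j + 1) : ℝ)
        ≤ m.choose (r + j) * (((m : ℝ) - r) / (r + 1)) := by
      rw [← mul_div_assoc, le_div_iff₀ (by positivity)]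
      calc (m.choose (r + j + 1) : ℝ) * (r + 1)
          ≤ m.choose (r + j + 1) * ((r + j + 1 : ℕ) : ℝ) := by
            refine mul_le_mul_of_nonneg_left ?_ (by positivity)
            push_cast
            linarith [(j.cast_nonneg : (0 : ℝ) ≤ j)]
        _ ≤ _ := hrec.trans_le (mul_le_mul_of_nonneg_left hsub (by positivity))
    calc (m.choose (r + (j + 1)) : ℝ) ≤ m.choose (r + j) * (((m : ℝ) - r) / (r + 1)) := hstep
      _ ≤ ((((m : ℝ) - r) / (r + 1)) ^ j * m.choose r) * (((m : ℝ) - r) / (r + 1)) :=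
          mul_le_mul_of_nonneg_right ih (by positivity)
      _ = _ := by ring

/-- Pulling back along `π` does not increase the size of bases. -/
theorem card_le_of_image_basis {α ι T : Type*} [DecidableEq α] [DecidableEq ι] [LinearOrder T]
    (f : Finset α → T) (d : ℕ)
    (dim : ∀ B : Finset α, (∀ B' : Finset α, B' ⊂ B → f B' < f B) → B.card ≤ d)
    (π : ι → α) (B : Finset ι)
    (hB : ∀ B' : Finset ι, B' ⊂ B → f (B'.image π) < f (B.image π)) : B.card ≤ d := by
  have hinj : Set.InjOn π B := by
    intro a ha b hb hab
    by_contra hne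
    have hlt := hB _ (erase_ssubset (mem_coe.1 ha))
    have himg : (B.erase a).image π = B.image π := by
      refine (image_subset_image (erase_subset a B)).antisymm fun x hx => ?_
      obtain ⟨c, hc, rfl⟩ := mem_image.1 hx
      rcases eq_or_ne c a with rfl | hca
      · exact mem_image.2 ⟨b, mem_erase.2 ⟨Ne.symm hne, mem_coe.1 hb⟩, hab.symm⟩
      · exact mem_image_of_mem π (mem_erase.2 ⟨hca, hc⟩)
    exact hlt.ne (congrArg f himg)
  rw [← card_image_of_injOn hinj]
  refine dim _ fun B' hB' => ?_
  obtain ⟨D, hD, rfl⟩ := subset_image_iff.1 hB'.subset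
  refine hB D ?_
  have hD' : D ⊆ B := by exact_mod_cast hD
  exact hD'.ssubset_of_ne fun h => hB'.ne (by rw [h])

/-- Higher-moment sampling lemma (Lemma 9): for any LP-type problem of
dimension at most `d`, any `k ≥ 1` and `1 ≤ r < m/2 - k`, the `k`-th moment of
the violator set size over a uniformly random `r`-element subset satisfies
`E[|W_R|^k] ≤ 2 (k·d·(m-r)/(r+1))^k`, stated here in summed form. -/
theorem stmt_5 {α ι T : Type*} [DecidableEq α] [Fintype ι] [LinearOrder T]
    (f : Finset α → T)
    (mono : ∀ F G : Finset α, F ⊆ G → f F ≤ f G)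
    (locality : ∀ F G : Finset α, F ⊆ G → f F = f G →
      ∀ h : α, f G < f (insert h G) → f F < f (insert h F))
    (d : ℕ) (hd : 1 ≤ d)
    (dim : ∀ B : Finset α, (∀ B' : Finset α, B' ⊂ B → f B' < f B) → B.card ≤ d)
    (m : ℕ) (hm : Fintype.card ι = m)
    (π : ι → α) (k r : ℕ) (hk : 1 ≤ k) (hr : 1 ≤ r)
    (hrm : (r : ℝ) < (m : ℝ) / 2 - (k : ℝ)) :
    ∑ R ∈ Finset.powersetCard r (Finset.univ : Finset ι),
        (((Finset.univ.filter (fun i : ι =>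
          f (R.image π) < f (insert (π i) (R.image π)))).card : ℝ)) ^ k
      ≤ 2 * ((k : ℝ) * d * ((m : ℝ) - r) / ((r : ℝ) + 1)) ^ k
          * (Nat.choose m r : ℝ) := by
  classical
  set g : Finset ι → T := fun R => f (R.image π) with hg
  have gmono : ∀ F G : Finset ι, F ⊆ G → g F ≤ g G := fun F G h =>
    mono _ _ (image_subset_image h)
  have gdim : ∀ B : Finset ι, (∀ B' : Finset ι, B' ⊂ B → g B' < g B) → B.card ≤ d :=
    card_le_of_image_basis f d dim π
  have hk' : (1 : ℝ) ≤ k := by exact_mod_cast hk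
  have hd' : (1 : ℝ) ≤ d := by exact_mod_cast hd
  have hr' : (1 : ℝ) ≤ r := by exact_mod_cast hr
  have hrm' : r ≤ m := by
    have : (r : ℝ) ≤ m := by linarith
    exact_mod_cast this
  have hx : 1 ≤ ((m : ℝ) - r) / (r + 1) := by
    rw [one_le_div (by positivity)]
    linarith
  have hy : 1 ≤ (d : ℝ) * (((m : ℝ) - r) / (r + 1)) := one_le_mul_of_one_le_of_one_le hd' hx
  have hbinom : ∀ j, ∑ R ∈ powersetCard r (univ : Finset ι),
      (((univ.filter fun i => g R < g (insert i R)).card).choose j : ℝ)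
        ≤ ((d : ℝ) * (((m : ℝ) - r) / (r + 1))) ^ j * (m.choose r : ℝ) := by
    intro j
    have hsum := sum_choose_card_violators_le g gmono d gdim r j
    rw [hm] at hsum
    calc _ ≤ (m.choose (r + j) : ℝ) * (d : ℝ) ^ j := by exact_mod_cast hsum
      _ ≤ ((((m : ℝ) - r) / (r + 1)) ^ j * m.choose r) * (d : ℝ) ^ j :=
          mul_le_mul_of_nonneg_right (choose_add_le_pow_mul_choose m r j hrm') (by positivity)
      _ = _ := by rw [mul_pow]; ring
  have hmoment := sum_pow_mul_choose_le _ _ _ _ hy (by positivity) hbinom k 0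
  simp only [Nat.choose_zero_right, Nat.cast_one, mul_one, Nat.cast_zero, zero_add,
    add_zero] at hmoment
  simp only [hg, image_insert] at hmoment
  refine hmoment.trans ((mul_le_mul_of_nonneg_right (prod_odd_le_pow k) (by positivity)).trans ?_)
  have hrw : (k : ℝ) * d * ((m : ℝ) - r) / ((r : ℝ) + 1)
      = k * (d * (((m : ℝ) - r) / (r + 1))) := by ring
  rw [hrw, mul_pow (k : ℝ), ← mul_assoc, mul_assoc (2 : ℝ)]
  exact le_mul_of_one_le_left (by positivity) one_le_two
end

section
/- Let T ≥ 1 be an integer, C > 0 and M ≥ 0 be real numbers, and let ρ_1, …, ρ_T ∈ [0, C] be real numbers with Σ_{t=1}^T ρ_t ≥ M. Then Π_{t=1}^T (1 + ρ_t) ≥ (1 + C)^{⌊M/C⌋}. -/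
open Finset

/-- Bernoulli's inequality for exponents in `[0, 1]`, rescaled to the interval `[0, C]`. -/
theorem one_add_rpow_div_le_one_add {C x : ℝ} (hC : 0 < C) (hx : x ∈ Set.Icc (0 : ℝ) C) :
    (1 + C) ^ (x / C) ≤ 1 + x := by
  have h := rpow_one_add_le_one_add_mul_self (s := C) (by linarith)
    (div_nonneg hx.1 hC.le) ((div_le_one hC).2 hx.2)
  rwa [div_mul_cancel₀ x hC.ne'] at h

/-- If `ρ_t ∈ [0,C]` for all `t` and `∑_t ρ_t ≥ M`, then
`∏_{t=1}^T (1 + ρ_t) ≥ (1 + C)^⌊M/C⌋`. -/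
theorem stmt_9 (T : ℕ) (hT : 1 ≤ T) (C M : ℝ) (hC : 0 < C) (hM : 0 ≤ M)
    (ρ : Fin T → ℝ) (hρ : ∀ t, ρ t ∈ Set.Icc (0 : ℝ) C)
    (hsum : M ≤ ∑ t, ρ t) :
    (1 + C) ^ ⌊M / C⌋₊ ≤ ∏ t, (1 + ρ t) := by
  have hexp : (⌊M / C⌋₊ : ℝ) ≤ ∑ t, ρ t / C := by
    rw [← Finset.sum_div]
    exact (Nat.floor_le (div_nonneg hM hC.le)).trans (by gcongr)
  calc (1 + C) ^ ⌊M / C⌋₊ = (1 + C) ^ (⌊M / C⌋₊ : ℝ) := (Real.rpow_natCast _ _).symm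
    _ ≤ (1 + C) ^ (∑ t, ρ t / C) := Real.rpow_le_rpow_of_exponent_le (by linarith) hexp
    _ = ∏ t, (1 + C) ^ (ρ t / C) := Real.rpow_sum_of_pos (by linarith) _ _
    _ ≤ ∏ t, (1 + ρ t) := Finset.prod_le_prod (fun t _ => by positivity)
        fun t _ => one_add_rpow_div_le_one_add hC (hρ t)
end

section
/- Let d ≥ 1 and T ≥ 1 be integers, C > 0 a real number, and let ρ(j, t) ∈ [0, C] be real numbers for j ∈ {1, …, d} and t ∈ {1, …, T} such that Σ_{j=1}^d ρ(j, t) ≥ C for every t. Then there exists an index j* ∈ {1, …, d} with Π_{t=1}^T (1 + ρ(j*, t)) ≥ (1 + C)^{⌊T/d⌋}. -/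
open Finset

theorem one_add_sum_le_prod_one_add {ι : Type*} (s : Finset ι) {f : ι → ℝ}
    (hf : ∀ i ∈ s, 0 ≤ f i) : 1 + ∑ i ∈ s, f i ≤ ∏ i ∈ s, (1 + f i) := by
  classical
  induction s using Finset.induction_on with
  | empty => simp
  | insert a s ha ih =>
    rw [sum_insert ha, prod_insert ha]
    have hs : ∀ i ∈ s, 0 ≤ f i := fun i hi ↦ hf i (mem_insert_of_mem hi)
    have ha0 : 0 ≤ f a := hf a (mem_insert_self a s)
    nlinarith [ih hs, mul_nonneg ha0 (sum_nonneg hs),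
      mul_le_mul_of_nonneg_left (ih hs) ha0]

/-- If `ρ(j,t) ∈ [0,C]` and for every round `t` the values sum to at least `C`
over `j ∈ {1,…,d}`, then some index `j*` satisfies
`∏_{t=1}^T (1 + ρ(j*,t)) ≥ (1 + C)^⌊T/d⌋`. -/
theorem stmt_10 (d T : ℕ) (hd : 1 ≤ d) (hT : 1 ≤ T) (C : ℝ) (hC : 0 < C)
    (ρ : Fin d → Fin T → ℝ)
    (hρ : ∀ j t, ρ j t ∈ Set.Icc (0 : ℝ) C)
    (hsum : ∀ t, C ≤ ∑ j, ρ j t) :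
    ∃ j : Fin d, (1 + C) ^ (T / d) ≤ ∏ t, (1 + ρ j t) := by
  by_contra! h
  have hround (t : Fin T) : 1 + C ≤ ∏ j, (1 + ρ j t) :=
    (add_le_add_right (hsum t) 1).trans
      (one_add_sum_le_prod_one_add univ fun j _ ↦ (hρ j t).1)
  have hlower : (1 + C) ^ T ≤ ∏ j, ∏ t, (1 + ρ j t) := by
    rw [Finset.prod_comm]
    simpa using Finset.prod_le_prod (s := univ) (fun _ _ ↦ by positivity)
      (fun t _ ↦ hround t)
  have hupper : ∏ j, ∏ t, (1 + ρ j t) < ∏ _j : Fin d, (1 + C) ^ (T / d) :=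
    Finset.prod_lt_prod_of_nonempty
      (fun j _ ↦ Finset.prod_pos fun t _ ↦ by linarith [(hρ j t).1])
      (fun j _ ↦ h j) ⟨⟨0, hd⟩, mem_univ _⟩
  rw [prod_const, card_univ, Fintype.card_fin, ← pow_mul] at hupper
  have hpow : (1 + C) ^ (T / d * d) ≤ (1 + C) ^ T :=
    pow_le_pow_right₀ (by linarith) (Nat.div_mul_le_self T d)
  linarith
end

section
/- Let E be a finite-dimensional real inner product space (a Euclidean space) and for finite nonempty P ⊆ E let r(P) = inf over c ∈ E of max_{p ∈ P} dist(c, p). Let F ⊆ G be finite nonempty subsets of E with r(F) = r(G), and let h ∈ E be a point with r(G) < r(G ∪ {h}). Then r(F) < r(F ∪ {h}). (Locality of the smallest enclosing ball: since F and G have equal radii, their smallest enclosing balls coincide, and a point lying outside the ball of G lies outside the ball of F.) -/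
open Finset

section EnclosingRadius

variable {E : Type*} [NormedAddCommGroup E]

/-- The largest distance from `c` to a point of `S` is at most `R ≥ 0` iff all distances are. -/
lemma iSup_dist_le_iff (S : Finset E) (c : E) {R : ℝ} (hR : 0 ≤ R) :
    (⨆ p ∈ S, dist c p) ≤ R ↔ ∀ p ∈ S, dist c p ≤ R := by
  constructor
  · intro hle p hp
    refine le_trans ?_ hle
    have hbdd : BddAbove (Set.range fun q => ⨆ _ : q ∈ S, dist c q) := by
      refine ⟨∑ q ∈ S, dist c q, ?_⟩
      rintro _ ⟨q, rfl⟩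
      exact Real.iSup_le
        (fun hq => Finset.single_le_sum (f := fun q => dist c q) (fun _ _ => dist_nonneg) hq)
        (Finset.sum_nonneg fun _ _ => dist_nonneg)
    exact (ciSup_pos (f := fun _ : p ∈ S => dist c p) hp).ge.trans (le_ciSup hbdd p)
  · intro hall
    exact Real.iSup_le (fun p => Real.iSup_le (fun hp => hall p hp) hR) hR

lemma iSup_dist_nonneg (S : Finset E) (c : E) : 0 ≤ ⨆ p ∈ S, dist c p :=
  Real.iSup_nonneg fun _ => Real.iSup_nonneg fun _ => dist_nonneg

lemma dist_le_iSup_dist {S : Finset E} {p : E} (hp : p ∈ S) (c : E) :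
    dist c p ≤ ⨆ p ∈ S, dist c p :=
  (iSup_dist_le_iff S c (iSup_dist_nonneg S c)).1 le_rfl p hp

lemma iInf_iSup_dist_le (S : Finset E) (c : E) :
    (⨅ c : E, ⨆ p ∈ S, dist c p) ≤ ⨆ p ∈ S, dist c p :=
  ciInf_le ⟨0, by rintro _ ⟨d, rfl⟩; exact iSup_dist_nonneg S d⟩ c

lemma iInf_iSup_dist_nonneg (S : Finset E) : 0 ≤ ⨅ c : E, ⨆ p ∈ S, dist c p :=
  Real.iInf_nonneg (iSup_dist_nonneg S)

lemma continuous_iSup_dist (S : Finset E) : Continuous fun c : E => ⨆ p ∈ S, dist c p := by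
  refine (LipschitzWith.of_le_add fun c d => ?_).continuous
  refine (iSup_dist_le_iff S c (add_nonneg (iSup_dist_nonneg S d) dist_nonneg)).2 fun p hp => ?_
  linarith [dist_triangle c d p, dist_le_iSup_dist hp d]

/-- A nonempty finite set in a proper space has an optimal center. -/
lemma exists_forall_dist_le_iInf_iSup_dist [ProperSpace E] {S : Finset E} (hS : S.Nonempty) :
    ∃ c : E, ∀ p ∈ S, dist c p ≤ ⨅ c : E, ⨆ p ∈ S, dist c p := by
  obtain ⟨q, hq⟩ := hS
  obtain ⟨c, hc⟩ := (continuous_iSup_dist S).exists_forall_le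
    (Filter.tendsto_atTop_mono (dist_le_iSup_dist hq) (tendsto_dist_right_cocompact_atTop q))
  exact ⟨c, fun p hp => (dist_le_iSup_dist hp c).trans (le_ciInf hc)⟩

/-- In a strictly convex space the optimal center of a nonempty finite set is unique. -/
lemma eq_of_forall_dist_le_iInf_iSup_dist [NormedSpace ℝ E] [StrictConvexSpace ℝ E]
    {S : Finset E} (hS : S.Nonempty) {c d : E}
    (hc : ∀ p ∈ S, dist c p ≤ ⨅ c : E, ⨆ p ∈ S, dist c p)
    (hd : ∀ p ∈ S, dist d p ≤ ⨅ c : E, ⨆ p ∈ S, dist c p) : c = d := by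
  by_contra hne
  let m : E := (1 / 2 : ℝ) • c + (1 / 2 : ℝ) • d
  obtain ⟨q, hq, hmax⟩ := S.exists_max_image (fun p => dist m p) hS
  have hlt : dist m q < ⨅ c : E, ⨆ p ∈ S, dist c p :=
    combo_mem_ball_of_ne (hc q hq) (hd q hq) hne (by norm_num) (by norm_num) (by norm_num)
  exact absurd ((iInf_iSup_dist_le S m).trans ((iSup_dist_le_iff S m dist_nonneg).2 hmax))
    hlt.not_ge

end EnclosingRadius

/-- Locality of the smallest enclosing ball: if `F ⊆ G` are finite nonempty
sets with equal smallest enclosing ball radii `r(·) = ⨅ c, max_{p ∈ ·} dist c p`,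
and adding the point `h` to `G` strictly increases the radius, then adding `h`
to `F` strictly increases the radius as well. -/
theorem stmt_15 {E : Type*} [NormedAddCommGroup E] [InnerProductSpace ℝ E]
    [FiniteDimensional ℝ E] [DecidableEq E]
    (F G : Finset E) (hF : F.Nonempty) (hFG : F ⊆ G) (h : E)
    (hr : (⨅ c : E, ⨆ p ∈ F, dist c p) = ⨅ c : E, ⨆ p ∈ G, dist c p)
    (hviol : (⨅ c : E, ⨆ p ∈ G, dist c p)
      < ⨅ c : E, ⨆ p ∈ insert h G, dist c p) :
    (⨅ c : E, ⨆ p ∈ F, dist c p) < ⨅ c : E, ⨆ p ∈ insert h F, dist c p := by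
  by_contra! hle
  obtain ⟨c, hc⟩ := exists_forall_dist_le_iInf_iSup_dist (F.insert_nonempty h)
  obtain ⟨d, hd⟩ := exists_forall_dist_le_iInf_iSup_dist (hF.mono hFG)
  have hcd : c = d := eq_of_forall_dist_le_iInf_iSup_dist hF
    (fun p hp => (hc p (Finset.mem_insert_of_mem hp)).trans hle)
    (fun p hp => (hd p (hFG hp)).trans hr.ge)
  subst hcd
  refine hviol.not_ge ((iInf_iSup_dist_le _ c).trans
    ((iSup_dist_le_iff _ c (iInf_iSup_dist_nonneg G)).2 fun p hp => ?_))
  rcases Finset.mem_insert.1 hp with rfl | hp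
  · exact (hc p (Finset.mem_insert_self p F)).trans (hle.trans hr.le)
  · exact hd p hp
end

section
/- Let P be a finite set of points in the d-dimensional Euclidean space ℝ^d and let r(P) = inf over c ∈ ℝ^d of max_{p ∈ P} dist(c, p) (with r(∅) = 0). Then there exists a subset B ⊆ P with |B| ≤ d + 1 and r(B) = r(P). In other words, at most d + 1 points suffice to determine the smallest enclosing ball, so the combinatorial dimension of the smallest enclosing ball problem in ℝ^d is at most d + 1. -/
open Finset

section EnclosingRadius

variable {X : Type*} [PseudoMetricSpace X]

lemma dist_le_biSup_dist (B : Finset X) (c : X) {p : X} (hp : p ∈ B) :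
    dist c p ≤ ⨆ q ∈ B, dist c q := by
  have hbdd : BddAbove (Set.range fun q => ⨆ _ : q ∈ B, dist c q) := by
    refine ⟨∑ q ∈ B, dist c q, ?_⟩
    rintro _ ⟨q, rfl⟩
    exact Real.iSup_le (fun hq => single_le_sum (f := fun q => dist c q)
      (fun _ _ => dist_nonneg) hq) (sum_nonneg fun _ _ => dist_nonneg)
  simpa [hp] using le_ciSup hbdd p

lemma biSup_dist_nonneg (B : Finset X) (c : X) : 0 ≤ ⨆ q ∈ B, dist c q :=
  Real.iSup_nonneg fun _ => Real.iSup_nonneg fun _ => dist_nonneg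

lemma biSup_dist_le {B : Finset X} {c : X} {t : ℝ} (ht : 0 ≤ t)
    (h : ∀ p ∈ B, dist c p ≤ t) : ⨆ q ∈ B, dist c q ≤ t :=
  Real.iSup_le (fun q => Real.iSup_le (h q) ht) ht

lemma iInf_biSup_dist_le (B : Finset X) (c : X) :
    ⨅ c : X, ⨆ q ∈ B, dist c q ≤ ⨆ q ∈ B, dist c q :=
  ciInf_le ⟨0, by rintro _ ⟨c, rfl⟩; exact biSup_dist_nonneg B c⟩ c

lemma iInf_biSup_dist_mono [Nonempty X] {B P : Finset X} (h : B ⊆ P) :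
    ⨅ c : X, ⨆ q ∈ B, dist c q ≤ ⨅ c : X, ⨆ q ∈ P, dist c q :=
  le_ciInf fun c => (iInf_biSup_dist_le B c).trans <|
    biSup_dist_le (biSup_dist_nonneg P c) fun _ hp => dist_le_biSup_dist P c (h hp)

end EnclosingRadius

/-- A bound on the enclosing radii of all subsets of size at most `finrank + 1` bounds the
enclosing radius of the whole set. -/
lemma iInf_biSup_dist_le_of_forall_card_le {E : Type*} [NormedAddCommGroup E] [NormedSpace ℝ E]
    [FiniteDimensional ℝ E] {P : Finset E} {R : ℝ}
    (h : ∀ B ⊆ P, B.card ≤ Module.finrank ℝ E + 1 → ⨅ c : E, ⨆ q ∈ B, dist c q ≤ R) :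
    ⨅ c : E, ⨆ q ∈ P, dist c q ≤ R := by
  have hR : 0 ≤ R := (Real.iInf_nonneg fun c => biSup_dist_nonneg ∅ c).trans
    (h ∅ (empty_subset P) (by simp))
  refine le_of_forall_gt_imp_ge_of_dense fun t ht => ?_
  obtain ⟨c, hc⟩ : (⋂ p ∈ P, Metric.closedBall p t).Nonempty := by
    refine Convex.helly_theorem' (𝕜 := ℝ) (fun p _ => convex_closedBall p t) fun B hB hcard => ?_
    obtain ⟨c, hc⟩ := exists_lt_of_ciInf_lt ((h B hB hcard).trans_lt ht)
    exact ⟨c, Set.mem_iInter₂.2 fun p hp => (dist_le_biSup_dist B c hp).trans hc.le⟩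
  exact (iInf_biSup_dist_le P c).trans
    (biSup_dist_le (hR.trans ht.le) fun p hp => Set.mem_iInter₂.1 hc p hp)



/-- At most `d + 1` points determine the smallest enclosing ball in `ℝ^d`:
for every finite set `P` of points in `d`-dimensional Euclidean space there is
a subset `B ⊆ P` with `|B| ≤ d + 1` whose smallest enclosing ball radius
`r(·) = ⨅ c, max_{p ∈ ·} dist c p` equals that of `P`. -/
theorem stmt_16 (d : ℕ) (P : Finset (EuclideanSpace ℝ (Fin d))) :
    ∃ B ⊆ P, B.card ≤ d + 1 ∧
      (⨅ c : EuclideanSpace ℝ (Fin d), ⨆ p ∈ B, dist c p)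
        = ⨅ c : EuclideanSpace ℝ (Fin d), ⨆ p ∈ P, dist c p := by
  obtain ⟨B, hB, hmax⟩ := exists_max_image (P.powerset.filter fun B => B.card ≤ d + 1)
    (fun B => ⨅ c : EuclideanSpace ℝ (Fin d), ⨆ p ∈ B, dist c p) ⟨∅, by simp⟩
  simp only [mem_filter, mem_powerset] at hB hmax
  refine ⟨B, hB.1, hB.2, (iInf_biSup_dist_mono hB.1).antisymm ?_⟩
  exact iInf_biSup_dist_le_of_forall_card_le fun B' hB' hcard => hmax B' ⟨hB', by simpa using hcard⟩
end
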